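/- Consider a confidential DMS (V_c, p_{V_c}) and an independent public DMS (V_p, p_{V_p}) to be transmitted over a discrete memoryless wiretap channel p_{YZ|X}. Suppose there exists a finite set Q and a joint probability mass function p_{QX} on Q × X (with (Y,Z) generated from X through the channel, so that Q − X − (Y,Z) is a Markov chain) such that H(V_c) + H(V_p) < I(X;Y|Q), H(V_c) < I(X;Y|Q) − I(X;Z|Q), and H(V_p) > I(X;Z|Q). Then there exists a sequence of codes {C_n} (deterministic encoders f_n : V_c^n × V_p^n × {1,…,2^{d_n}} → X^n using a uniformly distributed seed of d_n bits with d_n/n → 0, and decoders g_n : Y^n → V_c^n × V_p^n) such that the average error probability P_e(C_n) = P[(V_c^n, V_p^n) ≠ g_n(Y^n)] → 0 and the secrecy metric S(C_n) = max_{v_c^n} V(p_{Z^n | V_c^n = v_c^n}, p_{Z^n}) → 0 as n → ∞. -/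

import Mathlib

open Finset Filter Real

attribute [local instance] Classical.propDecidable

noncomputable section

/-- `p` is a probability mass function on the finite type `α`. -/
def IsPMF {α : Type*} [Fintype α] (p : α → ℝ) : Prop :=
  (∀ a, 0 ≤ p a) ∧ ∑ a, p a = 1

/-- i.i.d. (product) distribution of `n` copies of a source with pmf `p`. -/
def iid {α : Type*} [Fintype α] (p : α → ℝ) (n : ℕ) : (Fin n → α) → ℝ :=
  fun x => ∏ i, p (x i)

/-- variational distance between two pmfs -/
def VD {α : Type*} [Fintype α] (p q : α → ℝ) : ℝ := ∑ a, |p a - q a|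

/-- Shannon entropy, base 2 -/
def Hsh {α : Type*} [Fintype α] (p : α → ℝ) : ℝ := - ∑ a, p a * Real.logb 2 (p a)

/-- Rényi entropy of order 2, base 2 -/
def H2 {α : Type*} [Fintype α] (p : α → ℝ) : ℝ := - Real.logb 2 (∑ a, (p a) ^ 2)

/-- min-entropy, base 2 -/
def Hinf {α : Type*} [Fintype α] (p : α → ℝ) : ℝ := - Real.logb 2 (⨆ a, p a)

/-- Kullback–Leibler divergence, base 2 -/
def KL {α : Type*} [Fintype α] (p q : α → ℝ) : ℝ := ∑ a, p a * Real.logb 2 (p a / q a)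

/-- pushforward of a pmf along a map -/
def push {α β : Type*} [Fintype α] [Fintype β] (p : α → ℝ) (f : α → β) : β → ℝ :=
  fun b => ∑ a, if f a = b then p a else 0

/-- conditional mutual information `I(X;Y|Q)` of a joint pmf on `Q × X × Y`, base 2:
`I(X;Y|Q) = H(Q,X) + H(Q,Y) - H(Q) - H(Q,X,Y)`. -/
def condMI {Q X Y : Type*} [Fintype Q] [Fintype X] [Fintype Y] (p : Q × X × Y → ℝ) : ℝ :=
  Hsh (fun qx : Q × X => ∑ y, p (qx.1, qx.2, y))
    + Hsh (fun qy : Q × Y => ∑ x, p (qy.1, x, qy.2))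
    - Hsh (fun q : Q => ∑ x, ∑ y, p (q, x, y))
    - Hsh p

/-- the set of `ε`-letter-typical sequences of length `n` -/
def typ {α : Type*} [Fintype α] (p : α → ℝ) (n : ℕ) (ε : ℝ) : Finset (Fin n → α) :=
  Finset.univ.filter fun x =>
    ∀ a, |((Finset.univ.filter fun i => x i = a).card : ℝ) / n - p a| ≤ ε * p a

/-- cumulative distribution function of the standard normal distribution -/
def stdΦ (x : ℝ) : ℝ := ∫ t in Set.Iic x, Real.exp (-(t ^ 2) / 2) / Real.sqrt (2 * Real.pi)

/-- `⌈2^r⌉₊`, the size of a message set `{1,…,2^r}` -/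
def e2 (r : ℝ) : ℕ := ⌈(2:ℝ) ^ r⌉₊

/-!
Draw the codewords of all pairs of source words independently, letter `i` from the conditional law
of `X` given `Q = q i`, along a fixed time-sharing sequence `q`. The intended receiver looks for a
pair of typical words whose codeword has information density above `n (I(X;Y|Q) - δ)` with the
channel output; a union bound makes its error small because there are about
`2 ^ (n (H(V_c) + H(V_p)))` such pairs. For a fixed confidential word the public word selects the
codeword, and it has more randomness than `n I(X;Z|Q)`, so by soft covering the law of the
eavesdropper's observation is close to the product output law. The public source thus does the work
of local randomness and the seed can be empty.

Random coding gives this closeness only on average over the confidential words. The few words for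
which it fails are sent as if they were one fixed good word; this adds little to the error
probability and makes the bound uniform.
-/

/-! ### Means and probabilities under finite mass functions -/

section FinitePMF

variable {α β : Type*} [Fintype α] [Fintype β]

/-- The mean of `f` under the weights `p`. It is also used for weights that do not sum to one. -/
def mean (p f : α → ℝ) : ℝ := ∑ a, p a * f a

/-- The mass that `p` gives to the event `S`. -/
def prob (p : α → ℝ) (S : Set α) : ℝ := ∑ a, S.indicator p a

lemma prob_eq_mean (p : α → ℝ) (S : Set α) : prob p S = mean p (S.indicator 1) :=
  sum_congr rfl fun a _ => by by_cases h : a ∈ S <;> simp [h]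

lemma mean_add (p f g : α → ℝ) : mean p (fun a => f a + g a) = mean p f + mean p g := by
  simp only [mean, mul_add, sum_add_distrib]

lemma mean_sub (p f g : α → ℝ) : mean p (fun a => f a - g a) = mean p f - mean p g := by
  simp only [mean, mul_sub, sum_sub_distrib]

lemma mean_const_mul (p f : α → ℝ) (c : ℝ) : mean p (fun a => c * f a) = c * mean p f := by
  simp only [mean, mul_sum, mul_left_comm]

lemma mean_sum {ι : Type*} (s : Finset ι) (p : α → ℝ) (f : ι → α → ℝ) :
    mean p (fun a => ∑ i ∈ s, f i a) = ∑ i ∈ s, mean p (f i) := by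
  simp only [mean, mul_sum]
  exact sum_comm

lemma mean_comm (p : α → ℝ) (q : β → ℝ) (f : α → β → ℝ) :
    mean p (fun a => mean q (f a)) = mean q fun b => mean p fun a => f a b := by
  simp only [mean, mul_sum, mul_left_comm]
  exact sum_comm

namespace IsPMF

variable {p : α → ℝ}

lemma nonempty (hp : IsPMF p) : Nonempty α := by
  by_contra h
  have := not_nonempty_iff.1 h
  simpa using hp.2

lemma mean_const (hp : IsPMF p) (c : ℝ) : mean p (fun _ => c) = c := by
  rw [mean, ← sum_mul, hp.2, one_mul]

lemma mean_mono (hp : IsPMF p) {f g : α → ℝ} (h : ∀ a, f a ≤ g a) : mean p f ≤ mean p g :=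
  sum_le_sum fun a _ => mul_le_mul_of_nonneg_left (h a) (hp.1 a)

lemma mean_nonneg (hp : IsPMF p) {f : α → ℝ} (h : ∀ a, 0 ≤ f a) : 0 ≤ mean p f :=
  sum_nonneg fun a _ => mul_nonneg (hp.1 a) (h a)

lemma exists_le_mean (hp : IsPMF p) (f : α → ℝ) : ∃ a, f a ≤ mean p f := by
  obtain ⟨a, -, ha⟩ := (concaveOn_id convex_univ).exists_le_of_centerMass (t := univ) (p := f)
    (fun a _ => hp.1 a) (by rw [hp.2]; exact one_pos) fun a _ => Set.mem_univ (f a)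
  exact ⟨a, by simpa [centerMass_eq_of_sum_1 _ _ hp.2, mean] using ha⟩

lemma mean_abs_le_sqrt (hp : IsPMF p) (f : α → ℝ) :
    mean p (fun a => |f a|) ≤ √(mean p fun a => f a ^ 2) := by
  refine Real.le_sqrt_of_sq_le ?_
  simpa only [mean, sq_abs] using
    Real.pow_arith_mean_le_arith_mean_pow univ p (fun a => |f a|) (fun a _ => hp.1 a) hp.2
      (fun a _ => abs_nonneg (f a)) 2

lemma mean_sq_sub_mean_le (hp : IsPMF p) (f : α → ℝ) :
    mean p (fun a => (f a - mean p f) ^ 2) ≤ mean p fun a => f a ^ 2 := by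
  have hexpand : mean p (fun a => (f a - mean p f) ^ 2) =
      mean p (fun a => f a ^ 2) - mean p f ^ 2 := by
    simp only [sub_sq', mean_sub, mean_add, mean_const_mul, hp.mean_const,
      mul_comm _ (mean p f)]
    ring
  rw [hexpand]
  exact sub_le_self _ (sq_nonneg _)

lemma prob_nonneg (hp : IsPMF p) (S : Set α) : 0 ≤ prob p S :=
  sum_nonneg fun a _ => Set.indicator_nonneg (fun a _ => hp.1 a) a

lemma prob_mono_of_ne_zero (hp : IsPMF p) {S T : Set α} (h : ∀ a ∈ S, p a ≠ 0 → a ∈ T) :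
    prob p S ≤ prob p T := by
  refine sum_le_sum fun a _ => Set.indicator_apply_le' (fun haS => ?_) fun _ =>
    Set.indicator_nonneg (fun a _ => hp.1 a) a
  rcases eq_or_ne (p a) 0 with ha | ha
  · simp [Set.indicator_apply, ha]
  · rw [Set.indicator_of_mem (h a haS ha)]

lemma prob_mono (hp : IsPMF p) {S T : Set α} (h : S ⊆ T) : prob p S ≤ prob p T :=
  hp.prob_mono_of_ne_zero fun _ ha _ => h ha

lemma prob_le_one (hp : IsPMF p) (S : Set α) : prob p S ≤ 1 :=
  (sum_le_sum fun a _ => Set.indicator_le_self' (fun a _ => hp.1 a) a).trans_eq hp.2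

lemma prob_compl (hp : IsPMF p) (S : Set α) : prob p Sᶜ = 1 - prob p S := by
  rw [eq_sub_iff_add_eq, ← hp.2, prob, prob, ← sum_add_distrib]
  exact sum_congr rfl fun a _ => Set.indicator_compl_add_self_apply S p a

lemma prob_union_le (hp : IsPMF p) (S T : Set α) : prob p (S ∪ T) ≤ prob p S + prob p T := by
  rw [prob, prob, prob, ← sum_add_distrib]
  refine sum_le_sum fun a _ => ?_
  have := Set.indicator_union_add_inter_apply p S T a
  linarith [Set.indicator_nonneg (fun a _ => hp.1 a) a (s := S ∩ T)]

lemma prob_biUnion_le (hp : IsPMF p) {ι : Type*} (s : Finset ι) (S : ι → Set α) :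
    prob p (⋃ i ∈ s, S i) ≤ ∑ i ∈ s, prob p (S i) := by
  induction s using Finset.induction_on with
  | empty => simp [prob]
  | insert i s hi ih =>
    rw [sum_insert hi, Finset.set_biUnion_insert]
    exact (hp.prob_union_le _ _).trans (add_le_add_right ih _)

lemma mul_prob_le_mean (hp : IsPMF p) {f : α → ℝ} (hf : ∀ a, 0 ≤ f a) (t : ℝ) :
    t * prob p {a | t ≤ f a} ≤ mean p f := by
  rw [prob_eq_mean, ← mean_const_mul]
  refine hp.mean_mono fun a => ?_
  by_cases h : t ≤ f a <;> simp [h, hf a]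

end IsPMF

end FinitePMF

/-! ### Products of mass functions -/

section Product

variable {ι κ α : Type*} [Fintype ι]

/-- The law of independent coordinates, the `i`-th one distributed according to `p i`. It serves
both as the law of a random codebook and as the block law of sources and channels. -/
def piPMF (p : ι → α → ℝ) : (ι → α) → ℝ := fun x => ∏ i, p i (x i)

lemma logb_piPMF {p : ι → α → ℝ} {x : ι → α} (hx : piPMF p x ≠ 0) :
    Real.logb 2 (piPMF p x) = ∑ i, Real.logb 2 (p i (x i)) :=
  Real.logb_prod _ _ fun i hi => prod_ne_zero_iff.1 hx i hi

variable [Fintype κ] [DecidableEq ι] [DecidableEq κ] [Fintype α]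

lemma sum_piPMF (p : ι → α → ℝ) : ∑ x, piPMF p x = ∏ i, ∑ a, p i a :=
  (Fintype.prod_sum p).symm

lemma IsPMF.piPMF {p : ι → α → ℝ} (hp : ∀ i, IsPMF (p i)) : IsPMF (piPMF p) :=
  ⟨fun _ => prod_nonneg fun i _ => (hp i).1 _, by simp only [sum_piPMF, (hp _).2, prod_const_one]⟩

lemma IsPMF.iid {p : α → ℝ} (hp : IsPMF p) (n : ℕ) : IsPMF (iid p n) :=
  IsPMF.piPMF fun _ : Fin n => hp

lemma mean_piPMF_subtype {p : ι → α → ℝ} (hp : ∀ i, IsPMF (p i)) (P : ι → Prop)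
    [DecidablePred P] (f : ({i // P i} → α) → ℝ) :
    mean (piPMF p) (fun x => f fun i => x i) = mean (piPMF fun i : {i // P i} => p i) f := by
  have hsplit : ∀ t : ({i // P i} → α) × ({i // ¬P i} → α),
      piPMF p ((Equiv.piEquivPiSubtypeProd P fun _ => α).symm t) =
        piPMF (fun i : {i // P i} => p i) t.1 * piPMF (fun i : {i // ¬P i} => p i) t.2 := by
    intro t
    rw [piPMF, ← Fintype.prod_subtype_mul_prod_subtype P]
    congr 1 <;> refine prod_congr rfl fun i _ => ?_ <;>
      simp [Equiv.piEquivPiSubtypeProd, i.2]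
  have hrest : ∀ x, f (fun i => (Equiv.piEquivPiSubtypeProd P fun _ => α).symm x i) = f x.1 :=
    fun x => congrArg (f ∘ Prod.fst)
      ((Equiv.piEquivPiSubtypeProd P fun _ => α).apply_symm_apply x)
  rw [mean, ← (Equiv.piEquivPiSubtypeProd P fun _ => α).symm.sum_comp, Fintype.sum_prod_type]
  refine sum_congr rfl fun x _ => ?_
  simp only [hsplit, hrest, mul_right_comm _ _ (f x), ← mul_sum,
    (IsPMF.piPMF fun i : {i // ¬P i} => hp i).2, mul_one]

lemma mean_piPMF_equiv (p : ι → α → ℝ) (e : κ ≃ ι) (f : (κ → α) → ℝ) :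
    mean (piPMF p) (fun x => f (x ∘ e)) = mean (piPMF fun k => p (e k)) f :=
  Fintype.sum_equiv (e.arrowCongr (Equiv.refl α)).symm _ _ fun x =>
    congrArg (· * f (x ∘ e)) (e.prod_comp fun i => p i (x i)).symm

lemma mean_piPMF_comp {p : ι → α → ℝ} (hp : ∀ i, IsPMF (p i)) {e : κ → ι}
    (he : Function.Injective e) (f : (κ → α) → ℝ) :
    mean (piPMF p) (fun x => f (x ∘ e)) = mean (piPMF fun k => p (e k)) f := by
  let E : κ ≃ {i // ∃ k, e k = i} := Equiv.ofInjective e he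
  exact (mean_piPMF_subtype hp (∃ k, e k = ·) fun y => f (y ∘ E)).trans
    (mean_piPMF_equiv (fun i : {i // ∃ k, e k = i} => p i) E f)

lemma mean_piPMF_eval {p : ι → α → ℝ} (hp : ∀ i, IsPMF (p i)) (i : ι) (f : α → ℝ) :
    mean (piPMF p) (fun x => f (x i)) = mean (p i) f := by
  refine (mean_piPMF_comp hp (e := fun _ : Unit => i) (Function.injective_of_subsingleton _)
    fun x => f (x ())).trans ?_
  refine Fintype.sum_equiv (Equiv.funUnique Unit α) _ _ fun x => ?_
  simp [piPMF]

lemma mean_piPMF_eval_eval {p : ι → α → ℝ} (hp : ∀ i, IsPMF (p i)) {i j : ι} (hij : i ≠ j)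
    (f : α → α → ℝ) :
    mean (piPMF p) (fun x => f (x i) (x j)) = mean (p i) fun a => mean (p j) (f a) := by
  have hinj : Function.Injective ![i, j] := by
    simpa [Function.Injective, Fin.forall_fin_two] using ⟨hij, hij.symm⟩
  refine (mean_piPMF_comp hp hinj fun x => f (x 0) (x 1)).trans ?_
  simp only [mean, mul_sum, ← mul_assoc]
  rw [← Fintype.sum_prod_type']
  refine Fintype.sum_equiv (finTwoArrowEquiv α) _ _ fun x => ?_
  simp [piPMF, finTwoArrowEquiv]

lemma mean_piPMF_sq_sum {p : ι → α → ℝ} (hp : ∀ i, IsPMF (p i)) {f : ι → α → ℝ}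
    (hf : ∀ i, mean (p i) (f i) = 0) :
    mean (piPMF p) (fun x => (∑ i, f i (x i)) ^ 2) = ∑ i, mean (p i) fun a => f i a ^ 2 := by
  simp only [sq, sum_mul_sum, mean_sum]
  refine sum_congr rfl fun i _ => ?_
  rw [sum_eq_single i (fun j _ hji => ?_) (by simp)]
  · exact mean_piPMF_eval hp i fun a => f i a * f i a
  · rw [mean_piPMF_eval_eval hp hji.symm fun a b => f i a * f j b]
    simp only [mean_const_mul, hf, mul_zero]
    simp [mean]

lemma prob_iid_le_abs_sub_mean {p : α → ℝ} (hp : IsPMF p) (f : α → ℝ) {δ : ℝ} (hδ : 0 < δ) {n : ℕ}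
    (hn : 0 < n) :
    prob (iid p n) {x | n * δ ≤ |∑ i, f (x i) - n * mean p f|} ≤
      mean p (fun a => (f a - mean p f) ^ 2) / δ ^ 2 * (n : ℝ)⁻¹ := by
  have hvar : mean (iid p n) (fun x => (∑ i, f (x i) - n * mean p f) ^ 2) =
      n * mean p fun a => (f a - mean p f) ^ 2 := by
    have hcentred := mean_piPMF_sq_sum (fun _ : Fin n => hp) (f := fun _ a => f a - mean p f)
      fun _ => by rw [mean_sub, hp.mean_const, sub_self]
    simp only [sum_sub_distrib, sum_const, card_univ, Fintype.card_fin, nsmul_eq_mul] at hcentred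
    exact hcentred
  have hsq : {x : Fin n → α | n * δ ≤ |∑ i, f (x i) - n * mean p f|} =
      {x | (n * δ) ^ 2 ≤ (∑ i, f (x i) - n * mean p f) ^ 2} := by
    ext x
    simp only [Set.mem_ofPred_eq, sq_le_sq, abs_of_nonneg (show 0 ≤ n * δ by positivity)]
  have hmarkov := (hp.iid n).mul_prob_le_mean
    (fun x => sq_nonneg (∑ i, f (x i) - n * mean p f)) ((n * δ) ^ 2)
  rw [hvar, ← hsq] at hmarkov
  have : (0 : ℝ) < n := by exact_mod_cast hn
  rw [← le_div_iff₀' (by positivity)] at hmarkov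
  refine hmarkov.trans_eq ?_
  field_simp

theorem tendsto_prob_iid_le_abs_sub_mean {p : α → ℝ} (hp : IsPMF p) (f : α → ℝ) {δ : ℝ}
    (hδ : 0 < δ) :
    Tendsto (fun n : ℕ => prob (iid p n) {x | n * δ ≤ |∑ i, f (x i) - n * mean p f|})
      atTop (nhds 0) := by
  refine squeeze_zero' (.of_forall fun n => (hp.iid n).prob_nonneg _)
    (eventually_gt_atTop 0 |>.mono fun n hn => prob_iid_le_abs_sub_mean hp f hδ hn) ?_
  simpa using tendsto_inv_atTop_nhds_zero_nat.const_mul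
    (mean p (fun a => (f a - mean p f) ^ 2) / δ ^ 2)

end Product

/-! ### Channels -/

section Channel

variable {α β : Type*} [Fintype β]

/-- `W` is a channel from `α` to `β`: `W a` is the law of the output for the input `a`. -/
def IsChannel (W : α → β → ℝ) : Prop := ∀ a, IsPMF (W a)

/-- The channel `W` with the input-output pairs outside `S` deleted. -/
def truncate (W : α → β → ℝ) (S : Set (α × β)) : α → β → ℝ :=
  fun a => (Prod.mk a ⁻¹' S).indicator (W a)

lemma IsChannel.truncate_nonneg {W : α → β → ℝ} (hW : IsChannel W) (S : Set (α × β)) (a : α)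
    (b : β) : 0 ≤ truncate W S a b :=
  Set.indicator_nonneg (fun b _ => (hW a).1 b) b

lemma IsChannel.truncate_le {W : α → β → ℝ} (hW : IsChannel W) (S : Set (α × β)) (a : α)
    (b : β) : truncate W S a b ≤ W a b :=
  Set.indicator_le_self' (fun b _ => (hW a).1 b) b

variable [Fintype α]

/-- The law of the output of the channel `W` for an input with law `p`. -/
def output (p : α → ℝ) (W : α → β → ℝ) : β → ℝ := fun b => ∑ a, p a * W a b

/-- The joint law of the input and the output of the channel `W` for an input with law `p`. -/
def joint (p : α → ℝ) (W : α → β → ℝ) : α × β → ℝ := fun t => p t.1 * W t.1 t.2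

lemma sum_output (p : α → ℝ) (W : α → β → ℝ) : ∑ b, output p W b = mean p fun a => ∑ b, W a b := by
  simp only [output, mean, mul_sum]
  exact sum_comm

lemma mean_output (p : α → ℝ) (W : α → β → ℝ) (f : β → ℝ) :
    mean (output p W) f = mean p fun a => mean (W a) f := by
  simp only [mean, output, sum_mul, mul_sum, mul_assoc]
  exact sum_comm

lemma prob_output (p : α → ℝ) (W : α → β → ℝ) (S : Set β) :
    prob (output p W) S = mean p fun a => prob (W a) S := by
  simp only [prob_eq_mean, mean_output]

lemma mean_joint (p : α → ℝ) (W : α → β → ℝ) (f : α × β → ℝ) :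
    mean (joint p W) f = mean p fun a => mean (W a) fun b => f (a, b) := by
  simp only [mean, joint, Fintype.sum_prod_type, mul_sum, mul_assoc]

lemma prob_joint (p : α → ℝ) (W : α → β → ℝ) (S : Set (α × β)) :
    prob (joint p W) S = mean p fun a => prob (W a) (Prod.mk a ⁻¹' S) := by
  simp only [prob_eq_mean, mean_joint]
  rfl

lemma IsPMF.output {p : α → ℝ} (hp : IsPMF p) {W : α → β → ℝ} (hW : IsChannel W) :
    IsPMF (output p W) :=
  ⟨fun b => sum_nonneg fun a _ => mul_nonneg (hp.1 a) ((hW a).1 b), by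
    simp only [sum_output, (hW _).2, hp.mean_const]⟩

lemma IsPMF.joint {p : α → ℝ} (hp : IsPMF p) {W : α → β → ℝ} (hW : IsChannel W) :
    IsPMF (joint p W) :=
  ⟨fun t => mul_nonneg (hp.1 t.1) ((hW t.1).1 t.2), by
    simp only [_root_.joint, Fintype.sum_prod_type, ← mul_sum, (hW _).2, mul_one, hp.2]⟩

lemma IsPMF.exists_joint_eq {p : α × β → ℝ} (hp : IsPMF p) :
    ∃ q K, IsPMF q ∧ IsChannel K ∧ _root_.joint q K = p := by
  obtain ⟨-, b₀⟩ := hp.nonempty.some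
  set q : α → ℝ := fun a => ∑ b, p (a, b)
  have hq : ∀ a, 0 ≤ q a := fun a => sum_nonneg fun b _ => hp.1 (a, b)
  have hzero : ∀ a, q a = 0 → ∀ b, p (a, b) = 0 := fun a ha b =>
    (sum_eq_zero_iff_of_nonneg fun b _ => hp.1 (a, b)).1 ha b (mem_univ b)
  refine ⟨q, fun a b => if q a = 0 then if b = b₀ then 1 else 0 else p (a, b) / q a,
    ⟨hq, by rw [← hp.2, Fintype.sum_prod_type]⟩, fun a => ?_, ?_⟩
  · by_cases ha : q a = 0
    · simp only [ha, if_true]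
      exact ⟨fun b => ite_nonneg zero_le_one le_rfl, by simp⟩
    · simp only [ha, if_false]
      exact ⟨fun b => div_nonneg (hp.1 _) (hq a), by rw [← sum_div]; exact div_self ha⟩
  · ext ⟨a, b⟩
    by_cases ha : q a = 0
    · simp [_root_.joint, ha, hzero a ha b]
    · simp [_root_.joint, ha, mul_div_cancel₀]

lemma VD_comm (p q : α → ℝ) : VD p q = VD q p := by
  simp only [VD, abs_sub_comm]

lemma VD_triangle (p q r : α → ℝ) : VD p r ≤ VD p q + VD q r := by
  rw [VD, VD, VD, ← sum_add_distrib]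
  exact sum_le_sum fun a _ => abs_sub_le _ _ _

lemma IsPMF.VD_eq_one_sub_sum {p q : α → ℝ} (hp : IsPMF p) (h : ∀ a, q a ≤ p a) :
    VD p q = 1 - ∑ a, q a := by
  rw [VD, ← hp.2, ← sum_sub_distrib]
  exact sum_congr rfl fun a _ => abs_of_nonneg (sub_nonneg.2 (h a))

lemma VD_output_le {p : α → ℝ} (hp : IsPMF p) (W : α → β → ℝ) (r : β → ℝ) :
    VD (output p W) r ≤ mean p fun a => VD (W a) r := by
  simp only [VD, mean_sum]
  refine sum_le_sum fun b _ => ?_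
  have hdiff : output p W b - r b = mean p fun a => W a b - r b := by
    rw [mean_sub, hp.mean_const]
    rfl
  rw [hdiff]
  refine (abs_sum_le_sum_abs _ _).trans_eq (sum_congr rfl fun a _ => ?_)
  rw [abs_mul, abs_of_nonneg (hp.1 a)]

lemma mean_sum_truncate (p : α → ℝ) (W : α → β → ℝ) (S : Set (α × β)) :
    mean p (fun a => ∑ b, truncate W S a b) = prob (joint p W) S :=
  (prob_joint p W S).symm

lemma VD_output_mul_output_truncate {p : α → ℝ} (hp : IsPMF p) {W : α → β → ℝ}
    (hW : IsChannel W) (S : Set (α × β)) {θ : ℝ} (hθ : θ ≤ 1) :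
    VD (output p W) (fun b => θ * output p (truncate W S) b) = 1 - θ * prob (joint p W) S := by
  have hle : ∀ b, θ * output p (truncate W S) b ≤ output p W b := fun b =>
    (mul_le_of_le_one_left (hp.mean_nonneg fun a => hW.truncate_nonneg S a b) hθ).trans
      (hp.mean_mono fun a => hW.truncate_le S a b)
  rw [(hp.output hW).VD_eq_one_sub_sum hle, ← mul_sum, sum_output, mean_sum_truncate]

/-- The pairs whose information density `log (W(b|a) / P(b))` exceeds `log G`, where `P` is the
output law of the input law `K`. The ratio is written as a product, so that no convention on
division is involved. -/
def infoAbove (K : α → ℝ) (W : α → β → ℝ) (G : ℝ) : Set (α × β) :=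
  {t | G * output K W t.2 < W t.1 t.2}

lemma prob_output_infoAbove_le (K : α → ℝ) {W : α → β → ℝ} (hW : IsChannel W) {G : ℝ} (hG : 0 < G)
    (a : α) : prob (output K W) (Prod.mk a ⁻¹' infoAbove K W G) ≤ G⁻¹ := by
  rw [← mul_one G⁻¹, ← (hW a).2, mul_sum, prob]
  refine sum_le_sum fun b _ => Set.indicator_apply_le' (fun hb => ?_) fun _ =>
    mul_nonneg (inv_nonneg.2 hG.le) ((hW a).1 b)
  rw [← div_eq_inv_mul, le_div_iff₀' hG]
  exact le_of_lt hb

end Channel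

/-! ### Random coding -/

section RandomCoding

variable {V A B : Type*}

/-- The decoder that looks for a message in `T` whose codeword forms, together with the channel
output, a pair in `S`. When several messages qualify the choice is arbitrary. -/
def searchDecoder [Nonempty V] (T : Finset V) (S : Set (A × B)) (c : V → A) (b : B) : V :=
  Classical.epsilon fun v => v ∈ T ∧ (c v, b) ∈ S

lemma searchDecoder_ne_subset [Nonempty V] [DecidableEq V] {T : Finset V} (S : Set (A × B))
    (c : V → A) {v : V} (hv : v ∈ T) :
    {b | searchDecoder T S c b ≠ v} ⊆
      Prod.mk (c v) ⁻¹' Sᶜ ∪ ⋃ w ∈ T.erase v, Prod.mk (c w) ⁻¹' S := by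
  intro b hb
  by_cases hvb : (c v, b) ∈ S
  · have hfound : searchDecoder T S c b ∈ T ∧ (c (searchDecoder T S c b), b) ∈ S :=
      Classical.epsilon_spec (p := fun v => v ∈ T ∧ (c v, b) ∈ S) ⟨v, hv, hvb⟩
    exact .inr (Set.mem_biUnion (mem_erase.2 ⟨hb, hfound.1⟩) hfound.2)
  · exact .inl hvb

variable [Fintype V] [Fintype A] [Fintype B]

/-- The probability that the decoder `g` does not recover a message with law `p`, encoded by `f`
and sent over the channel `W`. -/
def errorProb (p : V → ℝ) (W : A → B → ℝ) (f : V → A) (g : B → V) : ℝ :=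
  mean p fun v => prob (W (f v)) {b | g b ≠ v}

lemma mean_prob_searchDecoder_ne_le [Nonempty V] [DecidableEq V] {K : A → ℝ} (hK : IsPMF K)
    {W : A → B → ℝ} (hW : IsChannel W) {T : Finset V} {G : ℝ} (hG : 0 < G) {v : V} (hv : v ∈ T) :
    mean (piPMF fun _ : V => K)
        (fun c => prob (W (c v)) {b | searchDecoder T (infoAbove K W G) c b ≠ v}) ≤
      prob (joint K W) (infoAbove K W G)ᶜ + #T / G := by
  set S := infoAbove K W G
  have hpoint : ∀ c : V → A, prob (W (c v)) {b | searchDecoder T S c b ≠ v} ≤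
      prob (W (c v)) (Prod.mk (c v) ⁻¹' Sᶜ) +
        ∑ w ∈ T.erase v, prob (W (c v)) (Prod.mk (c w) ⁻¹' S) := fun c =>
    ((hW _).prob_mono (searchDecoder_ne_subset S c hv)).trans <|
      ((hW _).prob_union_le _ _).trans (add_le_add_right ((hW _).prob_biUnion_le _ _) _)
  refine ((IsPMF.piPMF fun _ => hK).mean_mono hpoint).trans ?_
  rw [mean_add, mean_sum, prob_joint]
  refine add_le_add (mean_piPMF_eval (fun _ => hK) v
    fun a => prob (W a) (Prod.mk a ⁻¹' Sᶜ)).le ?_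
  have hconfused : ∀ w ∈ T.erase v,
      mean (piPMF fun _ : V => K) (fun c => prob (W (c v)) (Prod.mk (c w) ⁻¹' S)) ≤ G⁻¹ := by
    intro w hw
    rw [mean_piPMF_eval_eval (fun _ => hK) (ne_of_mem_erase hw)
      fun a a' => prob (W a') (Prod.mk a ⁻¹' S)]
    simp only [← prob_output]
    exact (hK.mean_mono fun a => prob_output_infoAbove_le K hW hG a).trans_eq (hK.mean_const _)
  refine (sum_le_card_nsmul _ _ _ hconfused).trans ?_
  rw [nsmul_eq_mul, div_eq_mul_inv]
  gcongr
  exact erase_subset v T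

theorem mean_errorProb_searchDecoder_le [Nonempty V] [DecidableEq V] {p : V → ℝ} (hp : IsPMF p)
    {K : A → ℝ} (hK : IsPMF K) {W : A → B → ℝ} (hW : IsChannel W) (T : Finset V) {G : ℝ}
    (hG : 0 < G) :
    mean (piPMF fun _ : V => K)
        (fun c => errorProb p W c (searchDecoder T (infoAbove K W G) c)) ≤
      prob p (T : Set V)ᶜ + prob (joint K W) (infoAbove K W G)ᶜ + #T / G := by
  set β := prob (joint K W) (infoAbove K W G)ᶜ + #T / G
  have hβ : 0 ≤ β := add_nonneg ((hK.joint hW).prob_nonneg _) (by positivity)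
  have hcode : IsPMF (piPMF fun _ : V => K) := IsPMF.piPMF fun _ => hK
  simp only [errorProb]
  rw [mean_comm, add_assoc, prob_eq_mean, ← hp.mean_const (_ + _ / _), ← mean_add]
  refine hp.mean_mono fun v => ?_
  by_cases hv : v ∈ T
  · simpa [hv] using mean_prob_searchDecoder_ne_le hK hW hG hv
  · refine (hcode.mean_mono fun c => (hW (c v)).prob_le_one _).trans ?_
    simpa [hv, hcode.mean_const] using hβ

lemma mean_abs_sum_mul_sub_mean_le [DecidableEq V] {K : A → ℝ} (hK : IsPMF K) (t : V → ℝ)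
    (w : A → ℝ) :
    mean (piPMF fun _ : V => K) (fun c => |∑ v, t v * (w (c v) - mean K w)|) ≤
      √((∑ v, t v ^ 2) * mean K fun a => w a ^ 2) := by
  refine ((IsPMF.piPMF fun _ => hK).mean_abs_le_sqrt _).trans (Real.sqrt_le_sqrt ?_)
  rw [mean_piPMF_sq_sum (fun _ => hK) (f := fun v a => t v * (w a - mean K w)) fun v => by
    rw [mean_const_mul, mean_sub, hK.mean_const, sub_self, mul_zero]]
  simp only [mul_pow, mean_const_mul, ← sum_mul]
  exact mul_le_mul_of_nonneg_left (hK.mean_sq_sub_mean_le w) (sum_nonneg fun v _ => sq_nonneg _)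

lemma mean_VD_output_sum_mul_output_le [DecidableEq V] {K : A → ℝ} (hK : IsPMF K) {t : V → ℝ}
    (ht : ∀ v, 0 ≤ t v) (ht_sum : ∑ v, t v ≤ 1) {σ : ℝ} (hσ : 0 ≤ σ) (htσ : ∀ v, t v ≤ σ)
    {w : A → B → ℝ} (hw : ∀ a b, 0 ≤ w a b) {R : B → ℝ} (hR : IsPMF R) {G : ℝ} (hG : 0 ≤ G)
    (hwR : ∀ a b, w a b ≤ G * R b) (houtput : ∀ b, output K w b ≤ R b) :
    mean (piPMF fun _ : V => K)
        (fun c => VD (output t (w ∘ c)) fun b => (∑ v, t v) * output K w b) ≤ √(σ * G) := by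
  have hdiff : ∀ (c : V → A) b, output t (w ∘ c) b - (∑ v, t v) * output K w b =
      ∑ v, t v * (w (c v) b - mean K fun a => w a b) := by
    intro c b
    simp only [mul_sub, sum_sub_distrib, sum_mul]
    rfl
  have ht_sq : ∑ v, t v ^ 2 ≤ σ := calc
    ∑ v, t v ^ 2 ≤ ∑ v, σ * t v := sum_le_sum fun v _ => by
      rw [sq]
      exact mul_le_mul_of_nonneg_right (htσ v) (ht v)
    _ ≤ σ := by
      rw [← mul_sum]
      exact mul_le_of_le_one_right hσ ht_sum
  have hw_sq : ∀ b, mean K (fun a => w a b ^ 2) ≤ G * R b ^ 2 := fun b => calc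
    mean K (fun a => w a b ^ 2) ≤ mean K fun a => G * R b * w a b := hK.mean_mono fun a => by
      rw [sq]
      exact mul_le_mul_of_nonneg_right (hwR a b) (hw a b)
    _ = G * R b * output K w b := mean_const_mul _ _ _
    _ ≤ G * R b * R b := mul_le_mul_of_nonneg_left (houtput b) (mul_nonneg hG (hR.1 b))
    _ = G * R b ^ 2 := by ring
  simp only [VD, mean_sum, hdiff]
  rw [← mul_one √(σ * G), ← hR.2, mul_sum]
  refine sum_le_sum fun b _ => (mean_abs_sum_mul_sub_mean_le hK t fun a => w a b).trans ?_
  calc √((∑ v, t v ^ 2) * mean K fun a => w a b ^ 2)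
    _ ≤ √(σ * (G * R b ^ 2)) := Real.sqrt_le_sqrt <|
      mul_le_mul ht_sq (hw_sq b) (hK.mean_nonneg fun a => sq_nonneg _) hσ
    _ = √(σ * G) * R b := by
      rw [← mul_assoc, Real.sqrt_mul (mul_nonneg hσ hG), Real.sqrt_sq (hR.1 b)]

lemma mean_VD_output_output_truncate [DecidableEq V] {p : V → ℝ} (hp : IsPMF p) {K : A → ℝ}
    (hK : IsPMF K) {W : A → B → ℝ} (hW : IsChannel W) (T : Set V) (S : Set (A × B)) :
    mean (piPMF fun _ : V => K)
        (fun c => VD (output p (W ∘ c)) (output (T.indicator p) (truncate W S ∘ c))) =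
      1 - prob p T * prob (joint K W) S := by
  have hVD : ∀ c : V → A, VD (output p (W ∘ c)) (output (T.indicator p) (truncate W S ∘ c)) =
      1 - ∑ v, T.indicator p v * prob (W (c v)) (Prod.mk (c v) ⁻¹' S) := fun c => by
    have hle : ∀ b, output (T.indicator p) (truncate W S ∘ c) b ≤ output p (W ∘ c) b := fun b =>
      sum_le_sum fun v _ => mul_le_mul (Set.indicator_le_self' (fun v _ => hp.1 v) v)
        (hW.truncate_le S _ b) (hW.truncate_nonneg S _ b) (hp.1 v)
    refine (IsPMF.VD_eq_one_sub_sum (hp.output fun v => hW (c v)) hle).trans ?_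
    rw [sum_output]
    rfl
  simp only [hVD, mean_sub, (IsPMF.piPMF fun _ : V => hK).mean_const, mean_sum, mean_const_mul,
    mean_piPMF_eval (fun _ : V => hK) _ fun a => prob (W a) (Prod.mk a ⁻¹' S), ← prob_joint,
    ← sum_mul]
  rfl

theorem mean_VD_output_codebook_le [DecidableEq V] {p : V → ℝ} (hp : IsPMF p) {K : A → ℝ}
    (hK : IsPMF K) {W : A → B → ℝ} (hW : IsChannel W) {T : Set V} {σ : ℝ} (hσ : 0 ≤ σ)
    (hT : ∀ v ∈ T, p v ≤ σ) {G : ℝ} (hG : 0 ≤ G) :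
    mean (piPMF fun _ : V => K) (fun c => VD (output p (W ∘ c)) (output K W)) ≤
      2 * (prob p Tᶜ + prob (joint K W) (infoAbove K W G)) + √(σ * G) := by
  set S := infoAbove K W G
  set t := T.indicator p
  set w := truncate W Sᶜ
  have hcode : IsPMF (piPMF fun _ : V => K) := IsPMF.piPMF fun _ => hK
  have hw_le : ∀ a b, w a b ≤ G * output K W b := fun a b =>
    Set.indicator_apply_le' (fun h => not_lt.1 h) fun _ => mul_nonneg hG ((hK.output hW).1 b)
  have hmiddle := mean_VD_output_sum_mul_output_le hK
    (Set.indicator_nonneg fun v _ => hp.1 v) (hp.prob_le_one T) hσ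
    (fun v => Set.indicator_apply_le' (hT v) fun _ => hσ) (hW.truncate_nonneg Sᶜ)
    (hK.output hW) hG hw_le fun b => hK.mean_mono fun a => hW.truncate_le Sᶜ a b
  have htriangle := hcode.mean_mono fun c => (VD_triangle (output p (W ∘ c)) (output t (w ∘ c))
    (output K W)).trans (add_le_add_right (VD_triangle _ (fun b => prob p T * output K w b) _) _)
  rw [mean_add, mean_add, hcode.mean_const, VD_comm _ (output K W),
    mean_VD_output_output_truncate hp hK hW,
    VD_output_mul_output_truncate hK hW _ (hp.prob_le_one T)] at htriangle
  have hmass : 1 - prob p T * prob (joint K W) Sᶜ ≤ prob p Tᶜ + prob (joint K W) S := by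
    have hT_compl : prob p T = 1 - prob p Tᶜ := by rw [hp.prob_compl]; ring
    rw [hT_compl, (hK.joint hW).prob_compl]
    nlinarith [mul_nonneg (hp.prob_nonneg Tᶜ) ((hK.joint hW).prob_nonneg S)]
  change mean _ (fun c => VD (output t (w ∘ c)) fun b => prob p T * output K w b) ≤ _ at hmiddle
  linarith

end RandomCoding

/-! ### Secrecy -/

section Secrecy

variable {U V A B C : Type*} [Fintype U] [Fintype V] [Fintype B] [Fintype C]

/-- The law of what an eavesdropper behind the channel `W` observes when the confidential message
is `u` and the public message has law `pV`. -/
def observed (pV : V → ℝ) (W : A → C → ℝ) (f : U × V → A) (u : U) : C → ℝ :=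
  output pV fun v => W (f (u, v))

/-- The secrecy metric: the largest variational distance between the law of the observation given
a confidential message and its law averaged over the confidential messages. -/
def leakage (pU : U → ℝ) (pV : V → ℝ) (W : A → C → ℝ) (f : U × V → A) : ℝ :=
  ⨆ u, VD (observed pV W f u) (output pU (observed pV W f))

lemma leakage_nonneg (pU : U → ℝ) (pV : V → ℝ) (W : A → C → ℝ) (f : U × V → A) :
    0 ≤ leakage pU pV W f :=
  Real.iSup_nonneg fun _ => sum_nonneg fun _ _ => abs_nonneg _

lemma leakage_le_of_forall_VD_le {pU : U → ℝ} (hU : IsPMF pU) {pV : V → ℝ} {W : A → C → ℝ}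
    {f : U × V → A} {R : C → ℝ} {t : ℝ} (h : ∀ u, VD (observed pV W f u) R ≤ t) :
    leakage pU pV W f ≤ 2 * t := by
  have := hU.nonempty
  refine ciSup_le fun u => (VD_triangle _ R _).trans ?_
  rw [two_mul, VD_comm R]
  exact add_le_add (h u)
    ((VD_output_le hU _ R).trans ((hU.mean_mono h).trans_eq (hU.mean_const t)))

/-- The encoder that treats every confidential message outside `S` as if it were `u₀`. -/
def replaceBad (f : U × V → A) (S : Set U) (u₀ : U) : U × V → A :=
  fun m => f (if m.1 ∈ S then m.1 else u₀, m.2)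

lemma errorProb_replaceBad_le {pU : U → ℝ} (hU : IsPMF pU) {pV : V → ℝ} (hV : IsPMF pV)
    {W : A → B → ℝ} (hW : IsChannel W) (f : U × V → A) (g : B → U × V) (S : Set U) (u₀ : U) :
    errorProb (joint pU fun _ => pV) W (replaceBad f S u₀) g ≤
      errorProb (joint pU fun _ => pV) W f g + prob pU Sᶜ := by
  rw [errorProb, errorProb, mean_joint, mean_joint, prob_eq_mean, ← mean_add]
  refine hU.mean_mono fun u => ?_
  by_cases hu : u ∈ S
  · simp [replaceBad, hu]
  · refine ((hV.mean_mono fun v => (hW _).prob_le_one _).trans_eq (hV.mean_const 1)).trans ?_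
    simpa [hu] using hV.mean_nonneg fun v => (hW (f (u, v))).prob_nonneg _

theorem exists_leakage_le_of_mean_VD_le {pU : U → ℝ} (hU : IsPMF pU) {pV : V → ℝ} (hV : IsPMF pV)
    {WB : A → B → ℝ} (hWB : IsChannel WB) (WC : A → C → ℝ) (R : C → ℝ) (f : U × V → A)
    (g : B → U × V) {ε : ℝ} (hε : 0 < ε)
    (h : errorProb (joint pU fun _ => pV) WB f g +
      mean pU (fun u => VD (observed pV WC f u) R) ≤ ε) :
    ∃ f' : U × V → A, errorProb (joint pU fun _ => pV) WB f' g ≤ ε + √ε ∧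
      leakage pU pV WC f' ≤ 2 * (ε + √ε) := by
  set D : U → ℝ := fun u => VD (observed pV WC f u) R
  set good : Set U := {u | ε + √ε ≤ D u}ᶜ
  have hsqrt : 0 < √ε := Real.sqrt_pos.2 hε
  have herror_nonneg : 0 ≤ errorProb (joint pU fun _ => pV) WB f g :=
    (hU.joint fun _ => hV).mean_nonneg fun m => (hWB (f m)).prob_nonneg _
  have hD_mean : mean pU D ≤ ε := by linarith
  obtain ⟨u₀, hu₀⟩ := hU.exists_le_mean D
  have hu₀_lt : D u₀ < ε + √ε :=
    hu₀.trans_lt (hD_mean.trans_lt (lt_add_of_pos_right ε hsqrt))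
  have hbad : prob pU goodᶜ ≤ √ε := by
    have hmarkov := hU.mul_prob_le_mean (f := D)
      (fun u => sum_nonneg fun _ _ => abs_nonneg _) (ε + √ε)
    rw [compl_compl]
    by_contra! hlarge
    nlinarith [Real.mul_self_sqrt hε.le]
  refine ⟨replaceBad f good u₀, ?_, leakage_le_of_forall_VD_le hU (R := R) fun u => ?_⟩
  · linarith [errorProb_replaceBad_le hU hV hWB f g good u₀,
      hU.mean_nonneg (f := D) fun u => sum_nonneg fun _ _ => abs_nonneg _]
  · by_cases hu : u ∈ good
    · have hD_lt : D u < ε + √ε := not_le.1 hu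
      simpa [observed, replaceBad, hu, D] using hD_lt.le
    · simpa [observed, replaceBad, hu, D] using hu₀_lt.le

variable [Fintype A]

lemma mean_mean_VD_observed_le [DecidableEq U] [DecidableEq V] {pU : U → ℝ} (hU : IsPMF pU)
    {pV : V → ℝ} (hV : IsPMF pV) {K : A → ℝ} (hK : IsPMF K) {W : A → C → ℝ} (hW : IsChannel W)
    {T : Set V} {σ : ℝ} (hσ : 0 ≤ σ) (hT : ∀ v ∈ T, pV v ≤ σ) {G : ℝ} (hG : 0 ≤ G) :
    mean (piPMF fun _ : U × V => K)
        (fun f => mean pU fun u => VD (observed pV W f u) (output K W)) ≤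
      2 * (prob pV Tᶜ + prob (joint K W) (infoAbove K W G)) + √(σ * G) := by
  rw [mean_comm]
  refine (hU.mean_mono fun u => ?_).trans_eq (hU.mean_const _)
  exact (mean_piPMF_comp (fun _ => hK) (Prod.mk_right_injective u)
    fun c => VD (output pV (W ∘ c)) (output K W)).trans_le
      (mean_VD_output_codebook_le hV hK hW hσ hT hG)

lemma prob_joint_const_prod_compl_le {pU : U → ℝ} (hU : IsPMF pU) {pV : V → ℝ} (hV : IsPMF pV)
    (S : Set U) (T : Set V) :
    prob (joint pU fun _ => pV) (S ×ˢ T)ᶜ ≤ prob pU Sᶜ + prob pV Tᶜ := by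
  have hsplit : mean pU (fun u => Sᶜ.indicator 1 u + prob pV Tᶜ) = prob pU Sᶜ + prob pV Tᶜ := by
    rw [mean_add, hU.mean_const, prob_eq_mean pU]
  rw [prob_joint, ← hsplit]
  refine hU.mean_mono fun u => ?_
  by_cases hu : u ∈ S
  · simp [hu]
  · simpa [hu] using (hV.prob_le_one _).trans (le_add_of_nonneg_right (hV.prob_nonneg Tᶜ))

theorem exists_code_of_one_shot_bound {pU : U → ℝ} (hU : IsPMF pU) {pV : V → ℝ} (hV : IsPMF pV)
    {K : A → ℝ} (hK : IsPMF K) {WB : A → B → ℝ} (hWB : IsChannel WB) {WC : A → C → ℝ}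
    (hWC : IsChannel WC) (TU : Finset U) (TV : Finset V) {GB GC σ ε : ℝ} (hGB : 0 < GB)
    (hGC : 0 ≤ GC) (hσ : 0 ≤ σ) (hTV : ∀ v ∈ TV, pV v ≤ σ) (hε : 0 < ε)
    (hbound : prob pU (TU : Set U)ᶜ + 3 * prob pV (TV : Set V)ᶜ +
      prob (joint K WB) (infoAbove K WB GB)ᶜ + 2 * prob (joint K WC) (infoAbove K WC GC) +
      #TU * #TV / GB + √(σ * GC) ≤ ε) :
    ∃ (f : U × V → A) (g : B → U × V),
      errorProb (joint pU fun _ => pV) WB f g ≤ ε + √ε ∧ leakage pU pV WC f ≤ 2 * (ε + √ε) := by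
  classical
  have := hU.nonempty
  have := hV.nonempty
  have herror := mean_errorProb_searchDecoder_le (hU.joint fun _ => hV) hK hWB (TU ×ˢ TV) hGB
  have hsecrecy := mean_mean_VD_observed_le hU hV hK hWC hσ hTV hGC (T := TV)
  rw [coe_product, card_product, Nat.cast_mul] at herror
  obtain ⟨c, hc⟩ := (IsPMF.piPMF fun _ : U × V => hK).exists_le_mean fun c =>
    errorProb (joint pU fun _ => pV) WB c (searchDecoder (TU ×ˢ TV) (infoAbove K WB GB) c) +
      mean pU fun u => VD (observed pV WC c u) (output K WC)
  rw [mean_add] at hc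
  obtain ⟨f, hf⟩ := exists_leakage_le_of_mean_VD_le hU hV hWB WC (output K WC) c _ hε
    (by linarith [prob_joint_const_prod_compl_le hU hV (TU : Set U) TV] : _ ≤ ε)
  exact ⟨f, _, hf⟩

end Secrecy

/-! ### Entropy and information density -/

section Entropy

variable {α β γ : Type*} [Fintype α] [Fintype β] [Fintype γ]

lemma mean_logb_self (p : α → ℝ) : mean p (fun a => Real.logb 2 (p a)) = -Hsh p :=
  (neg_neg _).symm

lemma Hsh_joint (p : α → ℝ) {W : α → β → ℝ} (hW : IsChannel W) :
    Hsh (joint p W) = Hsh p + mean p fun a => Hsh (W a) := by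
  have hlog : ∀ a b, p a * (W a b * Real.logb 2 (p a * W a b)) =
      p a * (W a b * (Real.logb 2 (p a) + Real.logb 2 (W a b))) := fun a b => by
    rcases eq_or_ne (p a) 0 with ha | ha
    · simp [ha]
    rcases eq_or_ne (W a b) 0 with hb | hb
    · simp [hb]
    rw [Real.logb_mul ha hb]
  have hsum : mean (joint p W) (fun t => Real.logb 2 (joint p W t)) =
      mean p fun a => Real.logb 2 (p a) + -Hsh (W a) := by
    rw [mean_joint]
    refine sum_congr rfl fun a _ => ?_
    beta_reduce
    rw [← mean_logb_self, ← (hW a).mean_const (Real.logb 2 (p a)), ← mean_add]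
    simp only [mean, joint, mul_sum, hlog]
  rw [← neg_inj, ← mean_logb_self, hsum, mean_add, mean_logb_self]
  simp only [mean, mul_neg, sum_neg_distrib]
  ring

/-- The information density `log (W(b|a) / P(b))`, with `P` the output law of the input law `p`.
It is meaningful only where `W a b` and the output law do not vanish. -/
def infoDensity (p : α → ℝ) (W : α → β → ℝ) (t : α × β) : ℝ :=
  Real.logb 2 (W t.1 t.2) - Real.logb 2 (output p W t.2)

lemma mean_infoDensity (p : α → ℝ) (W : α → β → ℝ) :
    mean (joint p W) (infoDensity p W) = Hsh (output p W) - mean p fun a => Hsh (W a) := by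
  have houtput : mean p (fun a => mean (W a) fun b => Real.logb 2 (output p W b)) =
      -Hsh (output p W) := by
    rw [← mean_output, mean_logb_self]
  simp only [infoDensity, mean_joint, mean_sub, mean_logb_self, houtput]
  simp only [mean, mul_neg, sum_neg_distrib]
  ring

lemma condMI_joint (p : α → ℝ) {K : α → β → ℝ} (hK : IsChannel K)
    {W : β → γ → ℝ} (hW : IsChannel W) :
    condMI (joint p fun a => joint (K a) W) =
      mean (joint p fun a => joint (K a) W) fun t => infoDensity (K t.1) W t.2 := by
  have hsum_out : (fun t : α × β => ∑ c, joint p (fun a => joint (K a) W) (t.1, t.2, c)) =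
      joint p K := by
    ext t
    simp only [joint, ← mul_sum, (hW _).2, mul_one]
  have hsum_in : (fun t : α × γ => ∑ b, joint p (fun a => joint (K a) W) (t.1, b, t.2)) =
      joint p fun a => output (K a) W := by
    ext t
    simp only [joint, output, ← mul_sum]
  have hsum_both : (fun a : α => ∑ b, ∑ c, joint p (fun a => joint (K a) W) (a, b, c)) = p := by
    ext a
    simp only [joint, ← mul_sum, (hW _).2, mul_one, (hK a).2]
  rw [condMI, hsum_out, hsum_in, hsum_both, mean_joint, Hsh_joint p hK,
    Hsh_joint p fun a => (hK a).output hW, Hsh_joint p fun a => (hK a).joint hW]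
  simp only [mean_infoDensity, Hsh_joint (K _) hW, mean_add, mean_sub]
  ring

lemma pos_of_joint_ne_zero {p : α → ℝ} (hp : IsPMF p) {W : α → β → ℝ} (hW : IsChannel W)
    {t : α × β} (ht : joint p W t ≠ 0) : 0 < W t.1 t.2 ∧ 0 < output p W t.2 := by
  obtain ⟨-, hW_ne⟩ := mul_ne_zero_iff.1 ht
  have hpos : 0 < joint p W t := ht.symm.lt_of_le ((hp.joint hW).1 t)
  exact ⟨hW_ne.symm.lt_of_le ((hW _).1 _), hpos.trans_le <|
    single_le_sum (f := fun a => p a * W a t.2) (fun a _ => mul_nonneg (hp.1 a) ((hW a).1 _))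
      (mem_univ t.1)⟩

lemma mem_infoAbove_rpow_iff {p : α → ℝ} (hp : IsPMF p) {W : α → β → ℝ} (hW : IsChannel W)
    {t : α × β} (ht : joint p W t ≠ 0) (r : ℝ) :
    t ∈ infoAbove p W (2 ^ r) ↔ r < infoDensity p W t := by
  obtain ⟨hW_pos, houtput_pos⟩ := pos_of_joint_ne_zero hp hW ht
  rw [infoDensity, ← Real.logb_div hW_pos.ne' houtput_pos.ne',
    Real.lt_logb_iff_rpow_lt one_lt_two (div_pos hW_pos houtput_pos), lt_div_iff₀ houtput_pos]
  rfl

end Entropy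

/-! ### Memoryless channels -/

section Block

variable {α β γ : Type*}

/-- The channel that applies `W` independently to each of the `n` letters of its input. -/
def blockChannel (W : α → β → ℝ) (n : ℕ) : (Fin n → α) → (Fin n → β) → ℝ :=
  fun x => piPMF fun i => W (x i)

lemma output_blockChannel [Fintype α] {n : ℕ} (p : Fin n → α → ℝ) (W : α → β → ℝ) :
    output (piPMF p) (blockChannel W n) = piPMF fun i => output (p i) W := by
  ext y
  simp only [output, piPMF, blockChannel, ← prod_mul_distrib]
  exact sum_piPMF fun i a => p i a * W a (y i)

variable [Fintype β]

lemma IsChannel.blockChannel {W : α → β → ℝ} (hW : IsChannel W) (n : ℕ) :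
    IsChannel (blockChannel W n) :=
  fun x => IsPMF.piPMF fun i => hW (x i)

variable [Fintype α] [Fintype γ]

lemma mean_piPMF_joint {ι : Type*} [Fintype ι] [DecidableEq ι] (p : ι → α → ℝ)
    (W : ι → α → β → ℝ) (f : (ι → α × β) → ℝ) :
    mean (piPMF fun i => joint (p i) (W i)) f =
      mean (joint (piPMF p) fun x => piPMF fun i => W i (x i)) fun t =>
        f fun i => (t.1 i, t.2 i) := by
  refine Fintype.sum_equiv (Equiv.arrowProdEquivProdArrow ι (fun _ => α) fun _ => β) _ _
    fun z => ?_
  simp only [piPMF, joint, prod_mul_distrib]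
  rfl

lemma mean_iid_joint_joint (p : α → ℝ) (K : α → β → ℝ) (W : β → γ → ℝ) {n : ℕ}
    (f : (Fin n → α × β × γ) → ℝ) :
    mean (iid (joint p fun a => joint (K a) W) n) f = mean (iid p n) fun q =>
      mean (joint (piPMF fun i => K (q i)) (blockChannel W n)) fun t =>
        f fun i => (q i, t.1 i, t.2 i) := by
  refine (mean_piPMF_joint (fun _ => p) (fun _ a => joint (K a) W) f).trans ?_
  rw [mean_joint]
  exact sum_congr rfl fun q _ => congrArg _ <|
    mean_piPMF_joint (fun i => K (q i)) (fun _ => W) fun z => f fun i => (q i, z i)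

lemma infoDensity_blockChannel {n : ℕ} {p : Fin n → α → ℝ} (hp : ∀ i, IsPMF (p i))
    {W : α → β → ℝ} (hW : IsChannel W) {t : (Fin n → α) × (Fin n → β)}
    (ht : joint (piPMF p) (blockChannel W n) t ≠ 0) :
    infoDensity (piPMF p) (blockChannel W n) t =
      ∑ i, infoDensity (p i) W (t.1 i, t.2 i) := by
  obtain ⟨hW_pos, houtput_pos⟩ :=
    pos_of_joint_ne_zero (IsPMF.piPMF hp) (hW.blockChannel n) ht
  rw [output_blockChannel] at houtput_pos
  rw [infoDensity, output_blockChannel, logb_piPMF houtput_pos.ne']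
  simp only [infoDensity, sum_sub_distrib]
  exact congrArg (· - _) (logb_piPMF hW_pos.ne')

section

variable {p : α → ℝ} (hp : IsPMF p) {K : α → β → ℝ} (hK : IsChannel K) {W : β → γ → ℝ}
  (hW : IsChannel W) {δ : ℝ} (hδ : 0 < δ)
include hp hK hW hδ

lemma tendsto_mean_prob_le_abs_sum_infoDensity_sub :
    Tendsto (fun n : ℕ => mean (iid p n) fun q =>
      prob (joint (piPMF fun i => K (q i)) (blockChannel W n))
        {t | n * δ ≤ |∑ i, infoDensity (K (q i)) W (t.1 i, t.2 i) -
          n * condMI (joint p fun a => joint (K a) W)|}) atTop (nhds 0) := by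
  refine (tendsto_prob_iid_le_abs_sub_mean (hp.joint fun a => (hK a).joint hW)
    (fun t => infoDensity (K t.1) W t.2) hδ).congr fun n => ?_
  simp only [prob_eq_mean, mean_iid_joint_joint, condMI_joint p hK hW]
  rfl

theorem tendsto_mean_prob_infoAbove_compl :
    Tendsto (fun n : ℕ => mean (iid p n) fun q =>
      prob (joint (piPMF fun i => K (q i)) (blockChannel W n))
        (infoAbove (piPMF fun i => K (q i)) (blockChannel W n)
          (2 ^ (n * (condMI (joint p fun a => joint (K a) W) - δ))))ᶜ) atTop (nhds 0) := by
  have hP : ∀ n (q : Fin n → α), IsPMF (piPMF fun i => K (q i)) := fun n q =>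
    IsPMF.piPMF fun i => hK (q i)
  refine squeeze_zero
    (fun n => (hp.iid n).mean_nonneg fun q => ((hP n q).joint (hW.blockChannel n)).prob_nonneg _)
    (fun n => (hp.iid n).mean_mono fun q =>
      ((hP n q).joint (hW.blockChannel n)).prob_mono_of_ne_zero fun t ht hne => ?_)
    (tendsto_mean_prob_le_abs_sum_infoDensity_sub hp hK hW hδ)
  rw [Set.mem_compl_iff, mem_infoAbove_rpow_iff (hP n q) (hW.blockChannel n) hne,
    infoDensity_blockChannel (fun i => hK (q i)) hW hne, not_lt] at ht
  rw [Set.mem_ofPred_eq, le_abs']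
  left
  linarith

theorem tendsto_mean_prob_infoAbove :
    Tendsto (fun n : ℕ => mean (iid p n) fun q =>
      prob (joint (piPMF fun i => K (q i)) (blockChannel W n))
        (infoAbove (piPMF fun i => K (q i)) (blockChannel W n)
          (2 ^ (n * (condMI (joint p fun a => joint (K a) W) + δ))))) atTop (nhds 0) := by
  have hP : ∀ n (q : Fin n → α), IsPMF (piPMF fun i => K (q i)) := fun n q =>
    IsPMF.piPMF fun i => hK (q i)
  refine squeeze_zero
    (fun n => (hp.iid n).mean_nonneg fun q => ((hP n q).joint (hW.blockChannel n)).prob_nonneg _)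
    (fun n => (hp.iid n).mean_mono fun q =>
      ((hP n q).joint (hW.blockChannel n)).prob_mono_of_ne_zero fun t ht hne => ?_)
    (tendsto_mean_prob_le_abs_sum_infoDensity_sub hp hK hW hδ)
  rw [mem_infoAbove_rpow_iff (hP n q) (hW.blockChannel n) hne,
    infoDensity_blockChannel (fun i => hK (q i)) hW hne] at ht
  rw [Set.mem_ofPred_eq, le_abs]
  left
  linarith

end

end Block

/-! ### Typical words -/

section Typical

variable {α : Type*} [Fintype α]

/-- The words of length `n` whose probability under the source `p` is within a factor `2 ^ (n δ)`
of `2 ^ (-n H(p))`. -/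
def weaklyTypical (p : α → ℝ) (n : ℕ) (δ : ℝ) : Finset (Fin n → α) :=
  {x | 2 ^ (-(n * (Hsh p + δ))) ≤ iid p n x ∧ iid p n x ≤ 2 ^ (-(n * (Hsh p - δ)))}

lemma iid_le_of_mem_weaklyTypical {p : α → ℝ} {n : ℕ} {δ : ℝ} {x : Fin n → α}
    (hx : x ∈ weaklyTypical p n δ) : iid p n x ≤ 2 ^ (-(n * (Hsh p - δ))) :=
  (mem_filter.1 hx).2.2

lemma card_weaklyTypical_le {p : α → ℝ} (hp : IsPMF p) (n : ℕ) (δ : ℝ) :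
    #(weaklyTypical p n δ) ≤ (2 : ℝ) ^ (n * (Hsh p + δ)) := by
  have hmass := calc
    #(weaklyTypical p n δ) * (2 : ℝ) ^ (-(n * (Hsh p + δ)))
    _ = ∑ _x ∈ weaklyTypical p n δ, (2 : ℝ) ^ (-(n * (Hsh p + δ))) := by
      rw [sum_const, nsmul_eq_mul]
    _ ≤ ∑ x ∈ weaklyTypical p n δ, iid p n x := sum_le_sum fun x hx => (mem_filter.1 hx).2.1
    _ ≤ ∑ x, iid p n x := sum_le_univ_sum_of_nonneg (hp.iid n).1
    _ = 1 := (hp.iid n).2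
  rwa [Real.rpow_neg zero_le_two, ← div_eq_mul_inv, div_le_one (by positivity)] at hmass

theorem tendsto_prob_weaklyTypical_compl {p : α → ℝ} (hp : IsPMF p) {δ : ℝ} (hδ : 0 < δ) :
    Tendsto (fun n => prob (iid p n) (weaklyTypical p n δ : Set (Fin n → α))ᶜ)
      atTop (nhds 0) := by
  refine squeeze_zero (fun n => (hp.iid n).prob_nonneg _)
    (fun n => (hp.iid n).prob_mono_of_ne_zero fun x hx hne => ?_)
    (tendsto_prob_iid_le_abs_sub_mean hp (fun a => Real.logb 2 (p a)) hδ)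
  have hpos : 0 < iid p n x := hne.symm.lt_of_le ((hp.iid n).1 x)
  have hlog : ∑ i, Real.logb 2 (p (x i)) = Real.logb 2 (iid p n x) := (logb_piPMF hne).symm
  rw [Set.mem_ofPred_eq, mean_logb_self, hlog]
  by_contra! hclose
  obtain ⟨hlower, hupper⟩ := abs_lt.1 hclose
  refine hx (mem_coe.2 (mem_filter.2 ⟨mem_univ x, ?_, ?_⟩))
  · rw [← Real.le_logb_iff_rpow_le one_lt_two hpos]
    linarith
  · rw [← Real.logb_le_iff_le_rpow one_lt_two hpos]
    linarith

end Typical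

/-! ### Block codes -/

section BlockCodes

variable {U V Q A B C : Type*} [Fintype U] [Fintype V] [Fintype Q] [Fintype A] [Fintype B]
  [Fintype C]

/-- The left side of `hbound` in `exists_code_of_one_shot_bound`, averaged over a time-sharing
sequence with law `iid pQ n`, for weakly typical words and the thresholds `2 ^ (n (I(A;B|Q) - δ))`
of the decoder and `2 ^ (n (I(A;C|Q) + δ))` of the covering. The last two terms bound the ones of
`hbound` that come from the number of codewords. -/
def codingBound (pU : U → ℝ) (pV : V → ℝ) (pQ : Q → ℝ) (K : Q → A → ℝ) (WB : A → B → ℝ)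
    (WC : A → C → ℝ) (δ : ℝ) (n : ℕ) : ℝ :=
  prob (iid pU n) (weaklyTypical pU n δ : Set (Fin n → U))ᶜ +
    3 * prob (iid pV n) (weaklyTypical pV n δ : Set (Fin n → V))ᶜ +
    (mean (iid pQ n) fun q => prob (joint (piPMF fun i => K (q i)) (blockChannel WB n))
      (infoAbove (piPMF fun i => K (q i)) (blockChannel WB n)
        (2 ^ (n * (condMI (joint pQ fun a => joint (K a) WB) - δ))))ᶜ) +
    2 * (mean (iid pQ n) fun q => prob (joint (piPMF fun i => K (q i)) (blockChannel WC n))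
      (infoAbove (piPMF fun i => K (q i)) (blockChannel WC n)
        (2 ^ (n * (condMI (joint pQ fun a => joint (K a) WC) + δ))))) +
    2 ^ (-(n * δ)) + √(2 ^ (-(n * δ)))

lemma tendsto_rpow_neg_mul_atTop {δ : ℝ} (hδ : 0 < δ) :
    Tendsto (fun n : ℕ => (2 : ℝ) ^ (-(n * δ))) atTop (nhds 0) := by
  refine (tendsto_pow_atTop_nhds_zero_of_lt_one (r := (2 : ℝ) ^ (-δ)) (by positivity)
    (Real.rpow_lt_one_of_one_lt_of_neg one_lt_two (neg_lt_zero.2 hδ))).congr fun n => ?_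
  rw [← Real.rpow_mul_natCast zero_le_two, neg_mul, mul_comm δ]

lemma card_mul_card_weaklyTypical_div_le {pU : U → ℝ} (hU : IsPMF pU) {pV : V → ℝ}
    (hV : IsPMF pV) {I δ : ℝ} (hI : Hsh pU + Hsh pV + 4 * δ ≤ I) (n : ℕ) :
    #(weaklyTypical pU n δ) * #(weaklyTypical pV n δ) / (2 : ℝ) ^ (n * (I - δ)) ≤
      2 ^ (-(n * δ)) := calc
  _ ≤ (2 : ℝ) ^ (n * (Hsh pU + δ)) * 2 ^ (n * (Hsh pV + δ)) / 2 ^ (n * (I - δ)) := by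
    gcongr
    exacts [card_weaklyTypical_le hU n δ, card_weaklyTypical_le hV n δ]
  _ = 2 ^ (n * (Hsh pU + Hsh pV + 3 * δ - I)) := by
    rw [← Real.rpow_add two_pos, ← Real.rpow_sub two_pos]
    ring_nf
  _ ≤ 2 ^ (-(n * δ)) := by
    rw [← mul_neg]
    gcongr <;> linarith

lemma rpow_neg_mul_rpow_le {H I δ : ℝ} (h : I + 3 * δ ≤ H) (n : ℕ) :
    (2 : ℝ) ^ (-(n * (H - δ))) * 2 ^ (n * (I + δ)) ≤ 2 ^ (-(n * δ)) := by
  rw [← Real.rpow_add two_pos, ← mul_neg, ← mul_neg, ← mul_add]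
  gcongr <;> linarith

section

variable {pU : U → ℝ} (hU : IsPMF pU) {pV : V → ℝ} (hV : IsPMF pV) {pQ : Q → ℝ} (hQ : IsPMF pQ)
  {K : Q → A → ℝ} (hK : IsChannel K) {WB : A → B → ℝ} {WC : A → C → ℝ}
include hU hV hQ hK

lemma exists_one_shot_bound_le_codingBound {δ : ℝ}
    (hB : Hsh pU + Hsh pV + 4 * δ ≤ condMI (joint pQ fun a => joint (K a) WB))
    (hC : condMI (joint pQ fun a => joint (K a) WC) + 3 * δ ≤ Hsh pV) (n : ℕ) :
    ∃ P : (Fin n → A) → ℝ, IsPMF P ∧ ∃ GB > 0, ∃ GC > 0,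
      prob (iid pU n) (weaklyTypical pU n δ : Set (Fin n → U))ᶜ +
        3 * prob (iid pV n) (weaklyTypical pV n δ : Set (Fin n → V))ᶜ +
        prob (joint P (blockChannel WB n)) (infoAbove P (blockChannel WB n) GB)ᶜ +
        2 * prob (joint P (blockChannel WC n)) (infoAbove P (blockChannel WC n) GC) +
        #(weaklyTypical pU n δ) * #(weaklyTypical pV n δ) / GB +
        √(2 ^ (-(n * (Hsh pV - δ))) * GC) ≤ codingBound pU pV pQ K WB WC δ n := by
  set IB := condMI (joint pQ fun a => joint (K a) WB) with hIB
  set IC := condMI (joint pQ fun a => joint (K a) WC) with hIC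
  obtain ⟨q, hq⟩ := (hQ.iid n).exists_le_mean fun q =>
    prob (joint (piPMF fun i => K (q i)) (blockChannel WB n))
      (infoAbove (piPMF fun i => K (q i)) (blockChannel WB n) (2 ^ (n * (IB - δ))))ᶜ +
    2 * prob (joint (piPMF fun i => K (q i)) (blockChannel WC n))
      (infoAbove (piPMF fun i => K (q i)) (blockChannel WC n) (2 ^ (n * (IC + δ))))
  rw [mean_add, mean_const_mul] at hq
  have hsqrt := Real.sqrt_le_sqrt (rpow_neg_mul_rpow_le hC n)
  refine ⟨piPMF fun i => K (q i), IsPMF.piPMF fun i => hK (q i), 2 ^ (n * (IB - δ)),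
    by positivity, 2 ^ (n * (IC + δ)), by positivity, ?_⟩
  rw [codingBound, ← hIB, ← hIC]
  linarith [card_mul_card_weaklyTypical_div_le hU hV hB n]

variable (hWB : IsChannel WB) (hWC : IsChannel WC)
include hWB hWC

lemma codingBound_pos (δ : ℝ) (n : ℕ) : 0 < codingBound pU pV pQ K WB WC δ n := by
  have hinput (q : Fin n → Q) : IsPMF (piPMF fun i => K (q i)) := IsPMF.piPMF fun i => hK (q i)
  have hdecoding := (hQ.iid n).mean_nonneg fun q =>
    ((hinput q).joint (hWB.blockChannel n)).prob_nonneg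
      (infoAbove (piPMF fun i => K (q i)) (blockChannel WB n)
        (2 ^ (n * (condMI (joint pQ fun a => joint (K a) WB) - δ))))ᶜ
  have hcovering := (hQ.iid n).mean_nonneg fun q =>
    ((hinput q).joint (hWC.blockChannel n)).prob_nonneg
      (infoAbove (piPMF fun i => K (q i)) (blockChannel WC n)
        (2 ^ (n * (condMI (joint pQ fun a => joint (K a) WC) + δ))))
  have hU_nonneg := (hU.iid n).prob_nonneg (weaklyTypical pU n δ : Set (Fin n → U))ᶜ
  have hV_nonneg := (hV.iid n).prob_nonneg (weaklyTypical pV n δ : Set (Fin n → V))ᶜ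
  rw [codingBound]
  positivity

lemma tendsto_codingBound {δ : ℝ} (hδ : 0 < δ) :
    Tendsto (codingBound pU pV pQ K WB WC δ) atTop (nhds 0) := by
  have hrate := tendsto_rpow_neg_mul_atTop hδ
  have hsqrt := (Real.continuous_sqrt.tendsto 0).comp hrate
  rw [Real.sqrt_zero] at hsqrt
  have hsum := (((((tendsto_prob_weaklyTypical_compl hU hδ).add
    ((tendsto_prob_weaklyTypical_compl hV hδ).const_mul 3)).add
    (tendsto_mean_prob_infoAbove_compl hQ hK hWB hδ)).add
    ((tendsto_mean_prob_infoAbove hQ hK hWC hδ).const_mul 2)).add hrate).add hsqrt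
  simp only [mul_zero, add_zero] at hsum
  exact hsum

theorem exists_code_le_codingBound {δ : ℝ}
    (hB : Hsh pU + Hsh pV + 4 * δ ≤ condMI (joint pQ fun a => joint (K a) WB))
    (hC : condMI (joint pQ fun a => joint (K a) WC) + 3 * δ ≤ Hsh pV) (n : ℕ) :
    ∃ (f : (Fin n → U) × (Fin n → V) → Fin n → A)
      (g : (Fin n → B) → (Fin n → U) × (Fin n → V)),
      errorProb (joint (iid pU n) fun _ => iid pV n) (blockChannel WB n) f g ≤
        codingBound pU pV pQ K WB WC δ n + √(codingBound pU pV pQ K WB WC δ n) ∧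
      leakage (iid pU n) (iid pV n) (blockChannel WC n) f ≤
        2 * (codingBound pU pV pQ K WB WC δ n + √(codingBound pU pV pQ K WB WC δ n)) := by
  obtain ⟨P, hP, GB, hGB, GC, hGC, hbound⟩ :=
    exists_one_shot_bound_le_codingBound hU hV hQ hK hB hC n
  exact exists_code_of_one_shot_bound (hU.iid n) (hV.iid n) hP (hWB.blockChannel n)
    (hWC.blockChannel n) (weaklyTypical pU n δ) (weaklyTypical pV n δ) hGB hGC.le
    (by positivity) (fun v => iid_le_of_mem_weaklyTypical)
    (codingBound_pos hU hV hQ hK hWB hWC δ n) hbound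

end

theorem exists_seedless_wiretap_codes {pU : U → ℝ} (hU : IsPMF pU) {pV : V → ℝ} (hV : IsPMF pV)
    {pQA : Q × A → ℝ} (hQA : IsPMF pQA) {WB : A → B → ℝ} (hWB : IsChannel WB) {WC : A → C → ℝ}
    (hWC : IsChannel WC)
    (hB : Hsh pU + Hsh pV < condMI fun t : Q × A × B => pQA (t.1, t.2.1) * WB t.2.1 t.2.2)
    (hC : (condMI fun t : Q × A × C => pQA (t.1, t.2.1) * WC t.2.1 t.2.2) < Hsh pV) :
    ∃ (f : (n : ℕ) → (Fin n → U) × (Fin n → V) → Fin n → A)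
      (g : (n : ℕ) → (Fin n → B) → (Fin n → U) × (Fin n → V)),
      Tendsto (fun n => errorProb (joint (iid pU n) fun _ => iid pV n) (blockChannel WB n) (f n)
        (g n)) atTop (nhds 0) ∧
      Tendsto (fun n => leakage (iid pU n) (iid pV n) (blockChannel WC n) (f n))
        atTop (nhds 0) := by
  obtain ⟨pQ, K, hQ, hK, rfl⟩ := hQA.exists_joint_eq
  simp only [joint, mul_assoc] at hB hC
  change _ < condMI (joint pQ fun a => joint (K a) WB) at hB
  change condMI (joint pQ fun a => joint (K a) WC) < _ at hC
  obtain ⟨δ, hδ, hδ_le⟩ := exists_between (lt_min (sub_pos.2 hB) (sub_pos.2 hC))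
  obtain ⟨hδB, hδC⟩ := lt_min_iff.1 hδ_le
  have hlimit := tendsto_codingBound hU hV hQ hK hWB hWC (δ := δ / 4) (by positivity)
  have hlimit' := hlimit.add ((Real.continuous_sqrt.tendsto 0).comp hlimit)
  rw [Real.sqrt_zero, add_zero] at hlimit'
  choose f g herror hleak using
    exists_code_le_codingBound hU hV hQ hK hWB hWC (δ := δ / 4) (by linarith) (by linarith)
  refine ⟨f, g, squeeze_zero (fun n => ?_) herror hlimit',
    squeeze_zero (fun n => leakage_nonneg _ _ _ _) hleak (by simpa using hlimit'.const_mul 2)⟩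
  exact ((hU.iid n).joint fun _ => hV.iid n).mean_nonneg fun m =>
    (hWB.blockChannel n (f n m)).prob_nonneg _

end BlockCodes

/-! ### Encoders that ignore the seed -/

section Seed

variable {X Y Z : Type*}

lemma sum_prod_eq_blockChannel_fst [Fintype Z] (W : X → Y × Z → ℝ) {n : ℕ} (x : Fin n → X)
    (y : Fin n → Y) :
    ∑ z : Fin n → Z, ∏ i, W (x i) (y i, z i) =
      blockChannel (fun a b => ∑ c, W a (b, c)) n x y :=
  sum_piPMF fun i c => W (x i) (y i, c)

lemma sum_prod_eq_blockChannel_snd [Fintype Y] (W : X → Y × Z → ℝ) {n : ℕ} (x : Fin n → X)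
    (z : Fin n → Z) :
    ∑ y : Fin n → Y, ∏ i, W (x i) (y i, z i) =
      blockChannel (fun a c => ∑ b, W a (b, c)) n x z :=
  sum_piPMF fun i b => W (x i) (b, z i)

lemma sum_seed (d : ℕ) (a b : ℝ) : ∑ _s : Fin (2 ^ d), a * (1 / 2 ^ d) * b = a * b := by
  rw [sum_const, card_univ, Fintype.card_fin, nsmul_eq_mul]
  push_cast
  field_simp

variable [Fintype Y] [Fintype Z]

lemma IsChannel.fst {W : X → Y × Z → ℝ} (hW : IsChannel W) :
    IsChannel fun x y => ∑ z, W x (y, z) :=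
  fun x => ⟨fun y => sum_nonneg fun z _ => (hW x).1 (y, z), by
    rw [← (hW x).2, Fintype.sum_prod_type]⟩

lemma IsChannel.snd {W : X → Y × Z → ℝ} (hW : IsChannel W) :
    IsChannel fun x z => ∑ y, W x (y, z) :=
  fun x => ⟨fun z => sum_nonneg fun y _ => (hW x).1 (y, z), by
    rw [← (hW x).2, Fintype.sum_prod_type_right]⟩

variable {U V : Type*} [Fintype U] [Fintype V] (pU : U → ℝ) (pV : V → ℝ) (W : X → Y × Z → ℝ)
  {n : ℕ} (f : U × V → Fin n → X) (d : ℕ)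

lemma sum_seed_eq_errorProb [DecidableEq U] [DecidableEq V] (g : (Fin n → Y) → U × V) :
    ∑ u, ∑ v, ∑ _s : Fin (2 ^ d), ∑ y : Fin n → Y, ∑ z : Fin n → Z,
        pU u * pV v * (1 / (2 : ℝ) ^ d) * (∏ i, W (f (u, v) i) (y i, z i)) *
          (if g y = (u, v) then 0 else 1) =
      errorProb (joint pU fun _ => pV) (blockChannel (fun a b => ∑ z, W a (b, z)) n) f g := by
  have hword (u : U) (v : V) (a : ℝ) : ∑ y : Fin n → Y, ∑ z : Fin n → Z,
      a * (∏ i, W (f (u, v) i) (y i, z i)) * (if g y = (u, v) then 0 else 1) =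
        a * prob (blockChannel (fun a b => ∑ z, W a (b, z)) n (f (u, v)))
          {y | g y ≠ (u, v)} := by
    rw [prob, mul_sum]
    refine sum_congr rfl fun y _ => ?_
    rw [← sum_mul, ← mul_sum, sum_prod_eq_blockChannel_fst]
    by_cases h : g y = (u, v) <;> simp [h]
  simp only [hword, sum_seed, errorProb, mean_joint]
  simp only [mean, mul_assoc, mul_sum]

lemma iSup_VD_sum_seed_eq_leakage :
    ⨆ u, VD
      (fun z : Fin n → Z => ∑ v, ∑ _s : Fin (2 ^ d), pV v * (1 / (2 : ℝ) ^ d) *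
        ∑ y : Fin n → Y, ∏ i, W (f (u, v) i) (y i, z i))
      (fun z : Fin n → Z => ∑ u', ∑ v, ∑ _s : Fin (2 ^ d), pU u' * pV v * (1 / (2 : ℝ) ^ d) *
        ∑ y : Fin n → Y, ∏ i, W (f (u', v) i) (y i, z i)) =
      leakage pU pV (blockChannel (fun a c => ∑ y, W a (y, c)) n) f := by
  simp only [sum_prod_eq_blockChannel_snd, sum_seed]
  simp only [mul_assoc, ← mul_sum]
  rfl

end Seed

/-- achievability part of the source–channel coding theorem for the
wiretap channel with vanishing-rate seed. -/
theorem statement0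
    {Vc Vp X Y Z : Type*} [Fintype Vc] [Fintype Vp] [Fintype X] [Fintype Y] [Fintype Z]
    (pVc : Vc → ℝ) (pVp : Vp → ℝ) (W : X → Y × Z → ℝ)
    (hVc : IsPMF pVc) (hVp : IsPMF pVp) (hW : ∀ x, IsPMF (W x))
    (hex : ∃ (k : ℕ) (pQX : Fin k × X → ℝ), IsPMF pQX ∧
      Hsh pVc + Hsh pVp <
        condMI (fun t : Fin k × X × Y => pQX (t.1, t.2.1) * ∑ z, W t.2.1 (t.2.2, z)) ∧
      Hsh pVc <
        condMI (fun t : Fin k × X × Y => pQX (t.1, t.2.1) * ∑ z, W t.2.1 (t.2.2, z))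
          - condMI (fun t : Fin k × X × Z => pQX (t.1, t.2.1) * ∑ y, W t.2.1 (y, t.2.2)) ∧
      Hsh pVp >
        condMI (fun t : Fin k × X × Z => pQX (t.1, t.2.1) * ∑ y, W t.2.1 (y, t.2.2))) :
    ∃ (d : ℕ → ℕ)
      (f : (n : ℕ) → (Fin n → Vc) × (Fin n → Vp) × Fin (2 ^ d n) → (Fin n → X))
      (g : (n : ℕ) → (Fin n → Y) → (Fin n → Vc) × (Fin n → Vp)),
      -- vanishing seed rate
      Tendsto (fun n => (d n : ℝ) / n) atTop (nhds 0) ∧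
      -- average probability of error `P_e(C_n) → 0`
      Tendsto (fun n =>
          ∑ vc : Fin n → Vc, ∑ vp : Fin n → Vp, ∑ u : Fin (2 ^ d n),
            ∑ y : Fin n → Y, ∑ z : Fin n → Z,
              iid pVc n vc * iid pVp n vp * (1 / (2:ℝ) ^ d n) *
                (∏ i, W (f n (vc, vp, u) i) (y i, z i)) *
                (if g n y = (vc, vp) then 0 else 1))
        atTop (nhds 0) ∧
      -- secrecy metric `S(C_n) = max_{v_c^n} V(p_{Z^n|V_c^n = v_c^n}, p_{Z^n}) → 0`
      Tendsto (fun n =>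
          ⨆ vc : Fin n → Vc,
            VD (fun z : Fin n → Z =>
                  ∑ vp : Fin n → Vp, ∑ u : Fin (2 ^ d n),
                    iid pVp n vp * (1 / (2:ℝ) ^ d n) *
                      ∑ y : Fin n → Y, ∏ i, W (f n (vc, vp, u) i) (y i, z i))
               (fun z : Fin n → Z =>
                  ∑ vc' : Fin n → Vc, ∑ vp : Fin n → Vp, ∑ u : Fin (2 ^ d n),
                    iid pVc n vc' * iid pVp n vp * (1 / (2:ℝ) ^ d n) *
                      ∑ y : Fin n → Y, ∏ i, W (f n (vc', vp, u) i) (y i, z i)))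
        atTop (nhds 0) := by
  obtain ⟨k, pQX, hQX, hY, -, hZ⟩ := hex
  obtain ⟨f, g, herror, hleakage⟩ :=
    exists_seedless_wiretap_codes hVc hVp hQX (IsChannel.fst hW) (IsChannel.snd hW) hY hZ
  refine ⟨fun _ => 0, fun n m => f n (m.1, m.2.1), g, by simp, ?_, ?_⟩
  · exact herror.congr fun n => (sum_seed_eq_errorProb _ _ W (f n) 0 (g n)).symm
  · exact hleakage.congr fun n => (iSup_VD_sum_seed_eq_leakage _ _ W (f n) 0).symm
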